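/- For every GLM-CGL state, the y-direction entropy-potential identity V · f_y + Φ B_y − q_y = 𝓕_y holds, where q_y = v_y 𝓔 = −ρ s v_y, Φ = 2ρ(v·B)/p⊥, and 𝓕_y = 2ρv_y + β⊥ v_y |B|² + 2 c_h β⊥ Ψ B_y. -/

import Mathlib

/-!
The flux is the sum of a gas, a magnetic and a divergence-cleaning part, and each pairs with the
entropy variable separately. In the gas pairing the kinetic terms cancel, the entropy contributes
exactly the entropy flux, and the pressures leave `5 - 1 - 2 = 2` copies of the mass flux. In the
magnetic pairing the induction and energy terms cancel, so that only the momentum terms survive;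
`Φ` is what removes the one proportional to the normal magnetic field. Of the three cleaning
contributions, equal up to sign, two cancel.
-/

open scoped RealInnerProductSpace

theorem real_inner_eq_fin_three (x y : EuclideanSpace ℝ (Fin 3)) :
    ⟪x, y⟫ = x 0 * y 0 + x 1 * y 1 + x 2 * y 2 := by
  simp [PiLp.inner_apply, Fin.sum_univ_three, mul_comm]

theorem real_norm_sq_eq_fin_three (x : EuclideanSpace ℝ (Fin 3)) :
    ‖x‖ ^ 2 = x 0 ^ 2 + x 1 ^ 2 + x 2 ^ 2 := by
  rw [EuclideanSpace.real_norm_sq_eq, Fin.sum_univ_three]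

/-- Primitive variables of the GLM-CGL system with velocity and magnetic field in an arbitrary real
inner product space: density `ρ`, velocity `v`, parallel and perpendicular pressures `pl` and `pp`,
magnetic field `B` and GLM scalar `Ψ`. Positivity of `ρ`, `pl` and `pp` is not part of
the structure. -/
structure GLMCGLState (E : Type*) where
  ρ : ℝ
  v : E
  pl : ℝ
  pp : ℝ
  B : E
  Ψ : ℝ

/-- The space of conservative variables `(ρ, ρ v, p∥, E, B, Ψ)`, in which fluxes and entropy
variables take their values. -/
abbrev GLMCGLConservative (E : Type*) := ℝ × E × ℝ × ℝ × E × ℝ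

namespace GLMCGLConservative

variable {E : Type*} [NormedAddCommGroup E] [InnerProductSpace ℝ E]

/-- The dot product on conservative variables, written `V · f` in the paper. -/
def pairing : GLMCGLConservative E → GLMCGLConservative E → ℝ
  | (a, m, p, e, b, ψ), (a', m', p', e', b', ψ') =>
    a * a' + ⟪m, m'⟫ + p * p' + e * e' + ⟪b, b'⟫ + ψ * ψ'

theorem pairing_add (V F G : GLMCGLConservative E) :
    pairing V (F + G) = pairing V F + pairing V G := by
  obtain ⟨a, m, p, e, b, ψ⟩ := V
  obtain ⟨a₁, m₁, p₁, e₁, b₁, ψ₁⟩ := F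
  obtain ⟨a₂, m₂, p₂, e₂, b₂, ψ₂⟩ := G
  simp only [pairing, inner_add_right]
  ring

/-- The components of a conservative vector over `ℝ³`, in the order
`(ρ, ρ v_x, ρ v_y, ρ v_z, p∥, E, B_x, B_y, B_z, Ψ)`. -/
def components : GLMCGLConservative (EuclideanSpace ℝ (Fin 3)) → Fin 10 → ℝ
  | (a, m, p, e, b, ψ) => ![a, m 0, m 1, m 2, p, e, b 0, b 1, b 2, ψ]

theorem pairing_eq_sum_components (V F : GLMCGLConservative (EuclideanSpace ℝ (Fin 3))) :
    pairing V F = ∑ k, components V k * components F k := by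
  simp only [pairing, components, real_inner_eq_fin_three, Fin.sum_univ_succ, Fin.sum_univ_zero,
    Fin.isValue, Matrix.cons_val_zero, Matrix.cons_val_succ]
  ring

end GLMCGLConservative

namespace GLMCGLState

open GLMCGLConservative

variable {E : Type*} (U : GLMCGLState E)

/-- The quantity `β⊥ = ρ / p⊥`. -/
noncomputable def betaPerp : ℝ := U.ρ / U.pp

/-- The quantity `β∥ = ρ / p∥`. -/
noncomputable def betaPar : ℝ := U.ρ / U.pl

/-- The specific entropy `s = ln (p∥ p⊥² / ρ⁵)`. -/
noncomputable def specificEntropy : ℝ := Real.log (U.pl * U.pp ^ 2 / U.ρ ^ 5)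

/-- The mathematical entropy `𝓔 = -ρ s`. -/
noncomputable def entropy : ℝ := -U.ρ * U.specificEntropy

/-- The mean pressure `p`, one third of the trace of the pressure tensor in three dimensions. The
same weights are used for every `E`. -/
noncomputable def meanPressure : ℝ := (2 * U.pp + U.pl) / 3

variable [NormedAddCommGroup E] [InnerProductSpace ℝ E] (ch : ℝ) (n : E)

/-- The total energy `e` without the GLM contribution. -/
noncomputable def energy : ℝ := (U.ρ * ‖U.v‖ ^ 2 + ‖U.B‖ ^ 2 + 3 * U.meanPressure) / 2

/-- The entropy variable `V`. -/
noncomputable def entropyVariable : GLMCGLConservative E :=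
  (5 - U.specificEntropy - U.betaPerp * ‖U.v‖ ^ 2, (2 * U.betaPerp) • U.v,
    U.betaPerp - U.betaPar, -(2 * U.betaPerp), (2 * U.betaPerp) • U.B, 2 * U.betaPerp * U.Ψ)

/-- The GLM-CGL flux through a surface with normal vector `n`, for the cleaning speed `ch`; the
flux `f_y` is the case where `n` is the second basis vector. -/
noncomputable def flux : GLMCGLConservative E :=
  (U.ρ * ⟪U.v, n⟫,
    (U.ρ * ⟪U.v, n⟫) • U.v + (U.pp + ‖U.B‖ ^ 2 / 2) • n - ⟪U.B, n⟫ • U.B,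
    U.pl * ⟪U.v, n⟫,
    ⟪U.v, n⟫ * (U.energy + U.pp + ‖U.B‖ ^ 2 / 2) - ⟪U.B, n⟫ * ⟪U.v, U.B⟫
      + ch * U.Ψ * ⟪U.B, n⟫,
    ⟪U.v, n⟫ • U.B - ⟪U.B, n⟫ • U.v + (ch * U.Ψ) • n,
    ch * ⟪U.B, n⟫)

/-- The part of the flux that remains for `B = 0` and `Ψ = 0`. -/
noncomputable def gasFlux : GLMCGLConservative E :=
  (U.ρ * ⟪U.v, n⟫, (U.ρ * ⟪U.v, n⟫) • U.v + U.pp • n, U.pl * ⟪U.v, n⟫,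
    ⟪U.v, n⟫ * ((U.ρ * ‖U.v‖ ^ 2 + 3 * U.meanPressure) / 2 + U.pp), 0, 0)

/-- The Maxwell stress, Poynting flux and ideal induction terms of the flux. -/
noncomputable def magneticFlux : GLMCGLConservative E :=
  (0, (‖U.B‖ ^ 2 / 2) • n - ⟪U.B, n⟫ • U.B, 0,
    ⟪U.v, n⟫ * ‖U.B‖ ^ 2 - ⟪U.B, n⟫ * ⟪U.v, U.B⟫, ⟪U.v, n⟫ • U.B - ⟪U.B, n⟫ • U.v, 0)

/-- The divergence-cleaning terms of the flux, those that carry the speed `ch`. -/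
noncomputable def cleaningFlux : GLMCGLConservative E :=
  (0, 0, 0, ch * U.Ψ * ⟪U.B, n⟫, (ch * U.Ψ) • n, ch * ⟪U.B, n⟫)

/-- The scalar `Φ = 2 ρ (v · B) / p⊥` that multiplies the normal magnetic field in the
entropy-potential identity. -/
noncomputable def godunovPotential : ℝ := 2 * U.ρ * ⟪U.v, U.B⟫ / U.pp

/-- The entropy flux potential in the direction `n`; `𝓕_y` is the case where `n` is the second
basis vector. -/
noncomputable def fluxPotential : ℝ :=
  2 * U.ρ * ⟪U.v, n⟫ + U.betaPerp * ⟪U.v, n⟫ * ‖U.B‖ ^ 2 + 2 * ch * U.betaPerp * U.Ψ * ⟪U.B, n⟫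

theorem flux_eq_gasFlux_add_magneticFlux_add_cleaningFlux :
    U.flux ch n = U.gasFlux n + U.magneticFlux n + U.cleaningFlux ch n := by
  simp only [flux, gasFlux, magneticFlux, cleaningFlux, energy, Prod.mk_add_mk, Prod.mk.injEq,
    add_zero, zero_add, true_and, and_true]
  exact ⟨by module, by ring⟩

theorem pairing_entropyVariable_gasFlux (hpl : U.pl ≠ 0) (hpp : U.pp ≠ 0) :
    pairing U.entropyVariable (U.gasFlux n) = 2 * U.ρ * ⟪U.v, n⟫ + ⟪U.v, n⟫ * U.entropy := by
  have betaPar_mul_pl : U.betaPar * U.pl = U.ρ := div_mul_cancel₀ _ hpl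
  have betaPerp_mul_pp : U.betaPerp * U.pp = U.ρ := div_mul_cancel₀ _ hpp
  simp only [pairing, entropyVariable, gasFlux, entropy, meanPressure, inner_add_right,
    real_inner_smul_left, real_inner_smul_right, real_inner_self_eq_norm_sq, inner_zero_right]
  linear_combination -⟪U.v, n⟫ * betaPar_mul_pl - 2 * ⟪U.v, n⟫ * betaPerp_mul_pp

theorem pairing_entropyVariable_magneticFlux :
    pairing U.entropyVariable (U.magneticFlux n) =
      U.betaPerp * ⟪U.v, n⟫ * ‖U.B‖ ^ 2 - U.godunovPotential * ⟪U.B, n⟫ := by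
  simp only [pairing, entropyVariable, magneticFlux, godunovPotential, betaPerp, inner_sub_right,
    real_inner_smul_left, real_inner_smul_right, real_inner_self_eq_norm_sq,
    real_inner_comm U.v U.B]
  ring

theorem pairing_entropyVariable_cleaningFlux :
    pairing U.entropyVariable (U.cleaningFlux ch n) =
      2 * ch * U.betaPerp * U.Ψ * ⟪U.B, n⟫ := by
  simp only [pairing, entropyVariable, cleaningFlux, real_inner_smul_left, real_inner_smul_right,
    inner_zero_right]
  ring

section Euclidean

variable (U : GLMCGLState (EuclideanSpace ℝ (Fin 3)))

theorem components_entropyVariable :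
    components U.entropyVariable =
      ![5 - U.specificEntropy - U.betaPerp * (U.v 0 ^ 2 + U.v 1 ^ 2 + U.v 2 ^ 2),
        2 * U.betaPerp * U.v 0, 2 * U.betaPerp * U.v 1, 2 * U.betaPerp * U.v 2,
        U.betaPerp - U.betaPar, -(2 * U.betaPerp),
        2 * U.betaPerp * U.B 0, 2 * U.betaPerp * U.B 1, 2 * U.betaPerp * U.B 2,
        2 * U.betaPerp * U.Ψ] := by
  simp [components, entropyVariable, real_norm_sq_eq_fin_three]

theorem components_flux_single_one :
    components (U.flux ch (EuclideanSpace.single 1 1)) =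
      ![U.ρ * U.v 1,
        U.ρ * U.v 0 * U.v 1 - U.B 0 * U.B 1,
        U.ρ * U.v 1 ^ 2 + U.pp + (U.B 0 ^ 2 + U.B 1 ^ 2 + U.B 2 ^ 2) / 2 - U.B 1 ^ 2,
        U.ρ * U.v 1 * U.v 2 - U.B 1 * U.B 2,
        U.pl * U.v 1,
        U.v 1 * (U.energy + U.pp + (U.B 0 ^ 2 + U.B 1 ^ 2 + U.B 2 ^ 2) / 2)
          - U.B 1 * (U.v 0 * U.B 0 + U.v 1 * U.B 1 + U.v 2 * U.B 2) + ch * U.Ψ * U.B 1,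
        U.v 1 * U.B 0 - U.v 0 * U.B 1,
        ch * U.Ψ,
        U.v 1 * U.B 2 - U.v 2 * U.B 1,
        ch * U.B 1] := by
  have inner_single_one (x : EuclideanSpace ℝ (Fin 3)) :
      ⟪x, EuclideanSpace.single 1 1⟫ = x 1 := by
    simp [EuclideanSpace.inner_single_right]
  simp only [components, flux, inner_single_one, real_norm_sq_eq_fin_three,
    real_inner_eq_fin_three U.v U.B, PiLp.add_apply, PiLp.sub_apply, PiLp.smul_apply, smul_eq_mul,
    PiLp.single_apply, Fin.isValue, Fin.reduceEq, if_true, if_false, Matrix.vecCons_inj,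
    true_and, and_true]
  and_intros <;> ring

end Euclidean

end GLMCGLState

open GLMCGLConservative in
theorem glm_cgl_entropy_potential_y_general {E : Type*} [NormedAddCommGroup E]
    [InnerProductSpace ℝ E] (ch : ℝ) (U : GLMCGLState E) (n : E)
    (hpl : U.pl ≠ 0) (hpp : U.pp ≠ 0) :
    pairing U.entropyVariable (U.flux ch n) + U.godunovPotential * ⟪U.B, n⟫
      - ⟪U.v, n⟫ * U.entropy = U.fluxPotential ch n := by
  rw [U.flux_eq_gasFlux_add_magneticFlux_add_cleaningFlux, pairing_add, pairing_add,
    U.pairing_entropyVariable_gasFlux n hpl hpp, U.pairing_entropyVariable_magneticFlux,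
    U.pairing_entropyVariable_cleaningFlux, GLMCGLState.fluxPotential]
  ring

/-- the y-direction entropy-potential identity
`V · f_y + Φ B_y − q_y = 𝓕_y` for every GLM-CGL state. -/
theorem glm_cgl_entropy_potential_y
    (ch : ℝ) (ρ vx vy vz pl pp Bx By Bz Ψ : ℝ)
    (hρ : 0 < ρ) (hpl : 0 < pl) (hpp : 0 < pp)
    (e : ℝ)
    (he : e = (ρ * (vx ^ 2 + vy ^ 2 + vz ^ 2) + (Bx ^ 2 + By ^ 2 + Bz ^ 2)
        + 3 * ((2 * pp + pl) / 3)) / 2) :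
    (∑ k : Fin 10,
      (![5 - Real.log (pl * pp ^ 2 / ρ ^ 5) - (ρ / pp) * (vx ^ 2 + vy ^ 2 + vz ^ 2),
          2 * (ρ / pp) * vx, 2 * (ρ / pp) * vy, 2 * (ρ / pp) * vz,
          (ρ / pp) - (ρ / pl), -(2 * (ρ / pp)),
          2 * (ρ / pp) * Bx, 2 * (ρ / pp) * By, 2 * (ρ / pp) * Bz,
          2 * (ρ / pp) * Ψ] k)
        * (![ρ * vy,
            ρ * vx * vy - Bx * By,
            ρ * vy ^ 2 + pp + (Bx ^ 2 + By ^ 2 + Bz ^ 2) / 2 - By ^ 2,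
            ρ * vy * vz - By * Bz,
            pl * vy,
            vy * (e + pp + (Bx ^ 2 + By ^ 2 + Bz ^ 2) / 2)
              - By * (vx * Bx + vy * By + vz * Bz) + ch * Ψ * By,
            vy * Bx - vx * By,
            ch * Ψ,
            vy * Bz - vz * By,
            ch * By] k))
      + (2 * ρ * (vx * Bx + vy * By + vz * Bz) / pp) * By
      - vy * (-ρ * Real.log (pl * pp ^ 2 / ρ ^ 5))
      = 2 * ρ * vy + (ρ / pp) * vy * (Bx ^ 2 + By ^ 2 + Bz ^ 2)
          + 2 * ch * (ρ / pp) * Ψ * By := by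
  subst he
  simpa [GLMCGLConservative.pairing_eq_sum_components,
      GLMCGLState.components_entropyVariable, GLMCGLState.components_flux_single_one,
      GLMCGLState.entropy, GLMCGLState.godunovPotential, GLMCGLState.fluxPotential,
      GLMCGLState.energy, GLMCGLState.meanPressure, GLMCGLState.betaPerp, GLMCGLState.betaPar,
      GLMCGLState.specificEntropy, real_norm_sq_eq_fin_three,
      real_inner_eq_fin_three] using
    glm_cgl_entropy_potential_y_general ch ⟨ρ, !₂[vx, vy, vz], pl, pp, !₂[Bx, By, Bz], Ψ⟩
      (EuclideanSpace.single 1 1) hpl.ne' hpp.ne'
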